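/- Let $F$ be a field and $X=\{x_1,\dots,x_n\}$. An algebraic branching program (ABP) is a layered directed acyclic graph with finite layers $L_0=\{s\},L_1,\dots,L_m=\{t\}$, $m\ge 1$, with edges only from one layer to the next, each edge labeled by an element of $X\cup F$; it computes the sum, over all directed $s$-to-$t$ paths, of the product of the edge labels along the path, and its size is its number of nodes. A subprogram of $P$ with the same terminals is an ABP obtained from $P$ by deleting nodes other than $s,t$ and deleting edges. For nodes $u,v$ with $u$ in an earlier layer than $v$, $[u,v]$ denotes the part of $P$ formed by all $u$-to-$v$ paths. A strict-interval ABP is an ABP such that on every $s$-to-$t$ path each variable appears at most once as an edge label, together with intervals $I_{u,v}\subseteq\{1,\dots,n\}$, one for each pair of nodes $u,v$ with $u$ in an earlier layer than $v$, such that $I_{u,v}$ contains the indices of all variables appearing in $[u,v]$, and $I_{u,v}\cap I_{v,w}=\emptyset$ for all consecutive $[u,v]$, $[v,w]$. Here an interval is a set $\{a,a+1,\dots,b\}$ or the empty set (so $I_{u,v}$ can be empty only if no variable appears in $[u,v]$). For intervals write $I\preceq J$ if $x\le y$ for all $x\in I$, $y\in J$ (that is, $b\le c$ if $I=[a,b]$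 and $J=[c,d]$ are nonempty). A node $v\ne s,t$ is ascending if $I_{s,v}\preceq I_{v,t}$, and descending if $I_{v,t}\preceq I_{s,v}$. Theorem. For every strict-interval ABP $P$ there exist strict-interval ABPs $P_1$ and $P_2$, each of which is, as an ABP, a subprogram of $P$ with the same terminals (and hence of size at most the size of $P$), such that all non-terminal nodes of $P_1$ are ascending, all non-terminal nodes of $P_2$ are descending (each with respect to its own intervals), and the polynomial computed by $P$ is the sum of the polynomials computed by $P_1$ and $P_2$. If, moreover, all intervals of $P$ are nonempty and $I_{u',v'}\subseteq I_{u,v}$ whenever $u,u',v',v$ lie in this order on a directed path of $P$ (where $u=u'$ or $v=v'$ is allowed, and $u'\neq v'$), then $P_1$ and $P_2$ can be chosen so that in addition their associated intervals are those of $P$. -/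

import Mathlib

/-- A (layered) algebraic branching program over `F` in the variables `x_0, …, x_{n-1}`.
Layer `k` (for `0 ≤ k ≤ m`) is the finite set `node k`; nodes are named by natural numbers, and
the same name in two layers denotes two different nodes.  The first and the last layer consist
of the start node `s` and the terminal node `t`.  For `k < m`, `u ∈ node k`, `v ∈ node (k + 1)`,
`label k u v = some e` means that there is an edge from `u` to `v` labeled by the constant or
variable `e`, and `label k u v = none` means that there is no edge from `u` to `v`.
Values of `node` and `label` outside these ranges are irrelevant. -/
structure ABP (F : Type*) (n : ℕ) where
  m : ℕ
  m_pos : 0 < m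
  s : ℕ
  t : ℕ
  node : ℕ → Finset ℕ
  node_zero : node 0 = {s}
  node_last : node m = {t}
  label : ℕ → ℕ → ℕ → Option (F ⊕ Fin n)

namespace ABP

variable {F : Type*} {n : ℕ}

/-- The polynomial of an edge label (a missing edge contributes `0`). -/
noncomputable def edgeVal [Field F] : Option (F ⊕ Fin n) → MvPolynomial (Fin n) F
  | none => 0
  | some (Sum.inl c) => MvPolynomial.C c
  | some (Sum.inr i) => MvPolynomial.X i

/-- The polynomial computed by the program: the sum over all `s`-to-`t` paths of the product of
the edge labels along the path.  (The sum runs over all choices of one node per layer; a choice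
that is not a path has a missing edge and contributes `0`.) -/
noncomputable def eval [Field F] (P : ABP F n) : MvPolynomial (Fin n) F :=
  ∑ π ∈ Fintype.piFinset (fun i : Fin (P.m + 1) => P.node i),
    ∏ k : Fin P.m, edgeVal (P.label k (π k.castSucc) (π k.succ))

/-- The size of a program is its number of nodes. -/
def size (P : ABP F n) : ℕ := ∑ i ∈ Finset.range (P.m + 1), (P.node i).card

/-- `π` describes a directed path from a node of layer `i` to a node of layer `j`: for
`i ≤ k ≤ j`, the path visits the node `π k` of layer `k`. -/
def IsPath (P : ABP F n) (i j : ℕ) (π : ℕ → ℕ) : Prop :=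
  (∀ k, i ≤ k → k ≤ j → π k ∈ P.node k) ∧
    ∀ k, i ≤ k → k < j → P.label k (π k) (π (k + 1)) ≠ none

/-- Syntactic multilinearity: on every `s`-to-`t` path, each variable appears at most once
as an edge label. -/
def SynMultilinear (P : ABP F n) : Prop :=
  ∀ π : ℕ → ℕ, P.IsPath 0 P.m π → ∀ (x : Fin n) (k l : ℕ), k < P.m → l < P.m →
    P.label k (π k) (π (k + 1)) = some (Sum.inr x) →
    P.label l (π l) (π (l + 1)) = some (Sum.inr x) → k = l

/-- The variable `x` appears in the subprogram `[u,v]`, where `u` is a node of layer `i` and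
`v` is a node of layer `j`: some `u`-to-`v` path contains an edge labeled `x`. -/
def VarInSub (P : ABP F n) (i j u v : ℕ) (x : Fin n) : Prop :=
  ∃ π : ℕ → ℕ, P.IsPath i j π ∧ π i = u ∧ π j = v ∧
    ∃ k, i ≤ k ∧ k < j ∧ P.label k (π k) (π (k + 1)) = some (Sum.inr x)

/-- `Q` is a subprogram of `P`: it has the same start node and the same terminal node, and
arises from `P` by deleting nodes and edges. -/
def IsSubprogram (Q P : ABP F n) : Prop :=
  Q.m = P.m ∧ Q.s = P.s ∧ Q.t = P.t ∧
    (∀ k, k ≤ P.m → Q.node k ⊆ P.node k) ∧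
    ∀ k u v, k < P.m → u ∈ Q.node k → v ∈ Q.node (k + 1) →
      Q.label k u v = none ∨ Q.label k u v = P.label k u v

end ABP

/-- A strict-interval program: a syntactically multilinear program together with, for all nodes
`u` of layer `i` and `v` of layer `j`, `i < j ≤ m`, an interval `interval i j u v` of indices
that contains the indices of all variables appearing in `[u,v]`, such that the intervals of
consecutive subprograms `[u,v]` and `[v,w]` are disjoint.  The order-connected subsets of
`Fin n` are the intervals `[a,b]` with `a ≤ b` and the empty set; the interval of `[u,v]` can
be empty only if no variable appears in `[u,v]`. -/
structure StrictIntervalABP (F : Type*) (n : ℕ) extends ABP F n where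
  synMultilinear : toABP.SynMultilinear
  interval : ℕ → ℕ → ℕ → ℕ → Set (Fin n)
  interval_ordConnected : ∀ i j u v, i < j → j ≤ m → u ∈ node i → v ∈ node j →
    (interval i j u v).OrdConnected
  mem_interval : ∀ i j u v (x : Fin n), i < j → j ≤ m → u ∈ node i → v ∈ node j →
    toABP.VarInSub i j u v x → x ∈ interval i j u v
  interval_disjoint : ∀ i j k u v w, i < j → j < k → k ≤ m →
    u ∈ node i → v ∈ node j → w ∈ node k →
    Disjoint (interval i j u v) (interval j k v w)

/-- `I ⪯ J`: no element of `I` exceeds an element of `J`.  For `I = [a,b]` with `a ≤ b` and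
`J = [c,d]` with `c ≤ d` this says `b ≤ c`. -/
def IntervalLE {n : ℕ} (I J : Set (Fin n)) : Prop := ∀ x ∈ I, ∀ y ∈ J, x ≤ y

namespace StrictIntervalABP

variable {F : Type*} {n : ℕ}

/-- The node `v` of layer `i` is ascending: `I_{s,v} ⪯ I_{v,t}`. -/
def Ascending (P : StrictIntervalABP F n) (i v : ℕ) : Prop :=
  IntervalLE (P.interval 0 i P.s v) (P.interval i P.m v P.t)

/-- The node `v` of layer `i` is descending: `I_{v,t} ⪯ I_{s,v}`. -/
def Descending (P : StrictIntervalABP F n) (i v : ℕ) : Prop :=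
  IntervalLE (P.interval i P.m v P.t) (P.interval 0 i P.s v)

/-- All associated intervals are nonempty. -/
def IntervalsNonempty (P : StrictIntervalABP F n) : Prop :=
  ∀ i j u v, i < j → j ≤ P.m → u ∈ P.node i → v ∈ P.node j → (P.interval i j u v).Nonempty

/-- `I_{u',v'} ⊆ I_{u,v}` whenever `u, u', v', v` lie in this order on a path, so that
`[u',v']` is a subprogram of `[u,v]`. -/
def IntervalsMonotone (P : StrictIntervalABP F n) : Prop :=
  ∀ (i i' j' j : ℕ) (π : ℕ → ℕ), i ≤ i' → i' < j' → j' ≤ j → j ≤ P.m → P.IsPath i j π →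
    P.interval i' j' (π i') (π j') ⊆ P.interval i j (π i) (π j)

end StrictIntervalABP

namespace ABP

variable {F : Type*} {n : ℕ}

/-- The subprogram that keeps the nodes satisfying `keep` and removes the edges satisfying
`cut`. -/
noncomputable def restrict (P : ABP F n) (keep : ℕ → ℕ → Prop) (cut : ℕ → ℕ → ℕ → Prop)
    (hs : keep 0 P.s) (ht : keep P.m P.t) : ABP F n :=
  open Classical in
  { P with
    node := fun k => (P.node k).filter (keep k)
    node_zero := by rw [P.node_zero, Finset.filter_singleton, if_pos hs]
    node_last := by rw [P.node_last, Finset.filter_singleton, if_pos ht]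
    label := fun k u v => if cut k u v then none else P.label k u v }

section restrict

variable {P : ABP F n} {keep : ℕ → ℕ → Prop} {cut : ℕ → ℕ → ℕ → Prop}
  {hs : keep 0 P.s} {ht : keep P.m P.t}

theorem mem_node_restrict {k v : ℕ} :
    v ∈ (P.restrict keep cut hs ht).node k ↔ v ∈ P.node k ∧ keep k v := by
  simp [restrict]

theorem label_restrict_of_ne_none {k u v : ℕ}
    (h : (P.restrict keep cut hs ht).label k u v ≠ none) :
    (P.restrict keep cut hs ht).label k u v = P.label k u v := by
  simp only [restrict] at h ⊢
  split_ifs at h ⊢ <;> simp_all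

theorem isSubprogram_restrict : (P.restrict keep cut hs ht).IsSubprogram P := by
  refine ⟨rfl, rfl, rfl, fun k _ v hv => (mem_node_restrict.1 hv).1, fun k u v _ _ _ => ?_⟩
  exact or_iff_not_imp_left.2 label_restrict_of_ne_none

theorem IsPath.of_restrict {i j : ℕ} {π : ℕ → ℕ} (h : (P.restrict keep cut hs ht).IsPath i j π) :
    P.IsPath i j π :=
  ⟨fun k hi hj => (mem_node_restrict.1 (h.1 k hi hj)).1,
    fun k hi hj => label_restrict_of_ne_none (h.2 k hi hj) ▸ h.2 k hi hj⟩

theorem label_eq_of_restrict {k u v : ℕ} {e : F ⊕ Fin n}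
    (h : (P.restrict keep cut hs ht).label k u v = some e) : P.label k u v = some e := by
  rw [← label_restrict_of_ne_none (by rw [h]; simp), h]

theorem VarInSub.of_restrict {i j u v : ℕ} {x : Fin n}
    (h : (P.restrict keep cut hs ht).VarInSub i j u v x) : P.VarInSub i j u v x := by
  obtain ⟨π, hπ, hu, hv, k, hi, hj, hk⟩ := h
  exact ⟨π, hπ.of_restrict, hu, hv, k, hi, hj, label_eq_of_restrict hk⟩

theorem SynMultilinear.restrict (h : P.SynMultilinear) :
    (P.restrict keep cut hs ht).SynMultilinear :=
  fun π hπ x k l hk hl hkx hlx =>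
    h π hπ.of_restrict x k l hk hl (label_eq_of_restrict hkx) (label_eq_of_restrict hlx)

open Classical in
theorem eval_restrict [Field F] : (P.restrict keep cut hs ht).eval =
    ∑ π ∈ Fintype.piFinset (fun i : Fin (P.m + 1) => P.node i),
      if (∀ i : Fin (P.m + 1), keep i (π i)) ∧
          ∀ k : Fin P.m, ¬ cut k (π k.castSucc) (π k.succ)
      then ∏ k : Fin P.m, edgeVal (P.label k (π k.castSucc) (π k.succ)) else 0 := by
  have heval : (P.restrict keep cut hs ht).eval =
      ∑ π ∈ Fintype.piFinset (fun i : Fin (P.m + 1) => (P.restrict keep cut hs ht).node i),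
        ∏ k : Fin P.m,
          edgeVal ((P.restrict keep cut hs ht).label k (π k.castSucc) (π k.succ)) := rfl
  rw [heval, ← Finset.sum_filter]
  refine (Finset.sum_subset_zero_on_sdiff (fun π hπ => ?_) (fun π hπ => ?_)
    (fun π hπ => ?_)).symm
  · simp only [Finset.mem_filter, Fintype.mem_piFinset] at hπ
    exact Fintype.mem_piFinset.2 fun i => mem_node_restrict.2 ⟨hπ.1 i, hπ.2.1 i⟩
  · rw [Finset.mem_sdiff] at hπ
    have h1 := fun i => mem_node_restrict.1 (Fintype.mem_piFinset.1 hπ.1 i)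
    have h2 : ∃ k : Fin P.m, cut k (π k.castSucc) (π k.succ) := by
      by_contra! h
      exact hπ.2 (Finset.mem_filter.2
        ⟨Fintype.mem_piFinset.2 fun i => (h1 i).1, fun i => (h1 i).2, h⟩)
    obtain ⟨k, hk⟩ := h2
    refine Finset.prod_eq_zero (Finset.mem_univ k) ?_
    simp only [ABP.restrict]
    rw [if_pos hk, edgeVal]
  · simp only [Finset.mem_filter] at hπ
    refine Finset.prod_congr rfl fun k _ => ?_
    simp only [ABP.restrict]
    rw [if_neg (hπ.2.2 k)]

end restrict

theorem IsSubprogram.size_le {Q P : ABP F n} (h : Q.IsSubprogram P) : Q.size ≤ P.size := by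
  unfold size
  rw [h.1]
  exact Finset.sum_le_sum fun k hk =>
    Finset.card_le_card (h.2.2.2.1 k (Nat.lt_succ_iff.1 (Finset.mem_range.1 hk)))

theorem IsPath.splice {P : ABP F n} {i i' j' j : ℕ} {π σ : ℕ → ℕ} (hπ : P.IsPath i j π)
    (hσ : P.IsPath i' j' σ) (hi : σ i' = π i') (hj : σ j' = π j') :
    P.IsPath i j (fun k => if i' ≤ k ∧ k ≤ j' then σ k else π k) := by
  refine ⟨fun k h1 h2 => ?_, fun k h1 h2 => ?_⟩
  · dsimp only
    split_ifs with h
    · exact hσ.1 k h.1 h.2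
    · exact hπ.1 k h1 h2
  · dsimp only
    by_cases h : i' ≤ k ∧ k < j'
    · rw [if_pos ⟨h.1, h.2.le⟩, if_pos ⟨by lia, h.2⟩]
      exact hσ.2 k h.1 h.2
    · have e1 : (if i' ≤ k ∧ k ≤ j' then σ k else π k) = π k := by
        split_ifs with h'
        · obtain rfl : k = j' := by lia
          exact hj
        · rfl
      have e2 : (if i' ≤ k + 1 ∧ k + 1 ≤ j' then σ (k + 1) else π (k + 1)) = π (k + 1) := by
        split_ifs with h'
        · obtain rfl : k + 1 = i' := by lia
          exact hi
        · rfl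
      rw [e1, e2]
      exact hπ.2 k h1 h2

theorem VarInSub.mono {P : ABP F n} {i i' j' j : ℕ} {π : ℕ → ℕ} {x : Fin n}
    (hi : i ≤ i') (hj : j' ≤ j) (hπ : P.IsPath i j π)
    (h : P.VarInSub i' j' (π i') (π j') x) : P.VarInSub i j (π i) (π j) x := by
  obtain ⟨σ, hσ, hu, hv, k, hk, hk', hx⟩ := h
  refine ⟨_, hπ.splice hσ hu hv, ?_, ?_, k, by lia, by lia, ?_⟩
  · split_ifs with h
    · obtain rfl : i = i' := by lia
      exact hu
    · rfl
  · split_ifs with h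
    · obtain rfl : j = j' := by lia
      exact hv
    · rfl
  · rwa [if_pos ⟨hk, hk'.le⟩, if_pos ⟨by lia, hk'⟩]

end ABP

theorem IntervalLE.of_empty_left {n : ℕ} {I J : Set (Fin n)} (h : I = ∅) : IntervalLE I J := by
  subst h
  exact fun x hx => hx.elim

theorem IntervalLE.of_empty_right {n : ℕ} {I J : Set (Fin n)} (h : J = ∅) : IntervalLE I J := by
  subst h
  exact fun _ _ _ hy => hy.elim

theorem IntervalLE.eq_empty_or_eq_empty {n : ℕ} {I J : Set (Fin n)} (h : IntervalLE I J)
    (h' : IntervalLE J I) (hd : Disjoint I J) : I = ∅ ∨ J = ∅ := by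
  by_contra! hne
  obtain ⟨⟨x, hx⟩, y, hy⟩ := hne
  exact Set.disjoint_left.1 hd hx (le_antisymm (h x hx y hy) (h' y hy x hx) ▸ hy)

theorem IntervalLE.mono {n : ℕ} {I J I' J' : Set (Fin n)} (h : IntervalLE I J) (hI : I' ⊆ I)
    (hJ : J' ⊆ J) : IntervalLE I' J' :=
  fun x hx y hy => h x (hI hx) y (hJ hy)

theorem intervalLE_total_of_disjoint {n : ℕ} {I J : Set (Fin n)} (hI : I.OrdConnected)
    (hJ : J.OrdConnected) (hd : Disjoint I J) : IntervalLE I J ∨ IntervalLE J I := by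
  by_contra! h
  simp only [IntervalLE, not_forall, not_le] at h
  obtain ⟨⟨a, ha, b, hb, hba⟩, c, hc, d, hd', hdc⟩ := h
  have hdisj := Set.disjoint_left.1 hd
  rcases le_total a c with hac | hca
  · exact hdisj ha (hJ.out hb hc ⟨hba.le, hac⟩)
  · rcases le_total d b with hdb | hbd
    · exact hdisj (hI.out hd' ha ⟨hdb, hba.le⟩) hb
    · exact hdisj hd' (hJ.out hb hc ⟨hbd, hdc.le⟩)

namespace StrictIntervalABP

variable {F : Type*} {n : ℕ}

/-- The strict-interval program obtained by deleting nodes and edges and keeping the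
intervals. -/
noncomputable def restrict (P : StrictIntervalABP F n) (keep : ℕ → ℕ → Prop)
    (cut : ℕ → ℕ → ℕ → Prop) (hs : keep 0 P.s) (ht : keep P.m P.t) : StrictIntervalABP F n where
  toABP := P.toABP.restrict keep cut hs ht
  synMultilinear := P.synMultilinear.restrict
  interval := P.interval
  interval_ordConnected i j u v hij hj hu hv := P.interval_ordConnected i j u v hij hj
    (ABP.mem_node_restrict.1 hu).1 (ABP.mem_node_restrict.1 hv).1
  mem_interval i j u v x hij hj hu hv hx := P.mem_interval i j u v x hij hj
    (ABP.mem_node_restrict.1 hu).1 (ABP.mem_node_restrict.1 hv).1 hx.of_restrict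
  interval_disjoint i j k u v w hij hjk hk hu hv hw := P.interval_disjoint i j k u v w hij hjk hk
    (ABP.mem_node_restrict.1 hu).1 (ABP.mem_node_restrict.1 hv).1 (ABP.mem_node_restrict.1 hw).1

theorem isSubprogram_restrict {P : StrictIntervalABP F n} {keep : ℕ → ℕ → Prop}
    {cut : ℕ → ℕ → ℕ → Prop} (hs : keep 0 P.s) (ht : keep P.m P.t) :
    (P.restrict keep cut hs ht).toABP.IsSubprogram P.toABP :=
  ABP.isSubprogram_restrict (hs := hs) (ht := ht)

theorem keep_of_mem_restrict {P : StrictIntervalABP F n} {keep : ℕ → ℕ → Prop}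
    {cut : ℕ → ℕ → ℕ → Prop} (hs : keep 0 P.s) (ht : keep P.m P.t) {i v : ℕ}
    (hv : v ∈ (P.restrict keep cut hs ht).node i) : keep i v :=
  (ABP.mem_node_restrict (hs := hs) (ht := ht).1 hv).2

/-- The same program, the interval of `[u,v]` being the order-convex hull of the indices of the
variables that appear in `[u,v]`. -/
def tighten (P : StrictIntervalABP F n) : StrictIntervalABP F n where
  toABP := P.toABP
  synMultilinear := P.synMultilinear
  interval i j u v := {x | ∃ a b, P.VarInSub i j u v a ∧ P.VarInSub i j u v b ∧ a ≤ x ∧ x ≤ b}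
  interval_ordConnected i j u v _ _ _ _ := by
    refine ⟨?_⟩
    rintro x ⟨a, _, ha, _, hax, _⟩ y ⟨_, b, _, hb, _, hyb⟩ z ⟨hxz, hzy⟩
    exact ⟨a, b, ha, hb, hax.trans hxz, hzy.trans hyb⟩
  mem_interval i j u v x _ _ _ _ hx := ⟨x, x, hx, hx, le_rfl, le_rfl⟩
  interval_disjoint i j k u v w hij hjk hk hu hv hw := by
    refine (P.interval_disjoint i j k u v w hij hjk hk hu hv hw).mono ?_ ?_
    · rintro x ⟨a, b, ha, hb, hax, hxb⟩
      have hj := hjk.le.trans hk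
      exact (P.interval_ordConnected i j u v hij hj hu hv).out
        (P.mem_interval i j u v a hij hj hu hv ha)
        (P.mem_interval i j u v b hij hj hu hv hb) ⟨hax, hxb⟩
    · rintro x ⟨a, b, ha, hb, hax, hxb⟩
      exact (P.interval_ordConnected j k v w hjk hk hv hw).out
        (P.mem_interval j k v w a hjk hk hv hw ha)
        (P.mem_interval j k v w b hjk hk hv hw hb) ⟨hax, hxb⟩

theorem tighten_intervalsMonotone (P : StrictIntervalABP F n) :
    P.tighten.IntervalsMonotone := by
  rintro i i' j' j π hi _ hj _ hπ x ⟨a, b, ha, hb, hab⟩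
  exact ⟨a, b, ha.mono hi hj hπ, hb.mono hi hj hπ, hab⟩

/-- The edge from `u` in layer `k` to `v` in layer `k + 1` is preceded only by empty intervals
`I_{s,u}` and followed only by empty intervals `I_{v,t}`. -/
def Neutral (P : StrictIntervalABP F n) (k u v : ℕ) : Prop :=
  (k = 0 ∨ P.interval 0 k P.s u = ∅) ∧ (k + 1 = P.m ∨ P.interval (k + 1) P.m v P.t = ∅)

section path

variable {P : StrictIntervalABP F n} {π : ℕ → ℕ}

theorem path_zero (hπ : P.IsPath 0 P.m π) : π 0 = P.s := by
  have := hπ.1 0 le_rfl (Nat.zero_le _)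
  rwa [P.node_zero, Finset.mem_singleton] at this

theorem path_last (hπ : P.IsPath 0 P.m π) : π P.m = P.t := by
  have := hπ.1 P.m (Nat.zero_le _) le_rfl
  rwa [P.node_last, Finset.mem_singleton] at this

theorem disjoint_at {i v : ℕ} (hi : 0 < i) (hm : i < P.m) (hv : v ∈ P.node i) :
    Disjoint (P.interval 0 i P.s v) (P.interval i P.m v P.t) :=
  P.interval_disjoint 0 i P.m P.s v P.t hi hm le_rfl (by simp [P.node_zero]) hv
    (by simp [P.node_last])

theorem ascending_or_descending {i v : ℕ} (hi : 0 < i) (hm : i < P.m) (hv : v ∈ P.node i) :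
    P.Ascending i v ∨ P.Descending i v :=
  intervalLE_total_of_disjoint
    (P.interval_ordConnected 0 i P.s v hi hm.le (by simp [P.node_zero]) hv)
    (P.interval_ordConnected i P.m v P.t hm le_rfl hv (by simp [P.node_last]))
    (disjoint_at hi hm hv)

theorem interval_prefix_mono (hmono : P.IntervalsMonotone) (hπ : P.IsPath 0 P.m π) {i j : ℕ}
    (hi : 0 < i) (hij : i ≤ j) (hj : j ≤ P.m) :
    P.interval 0 i P.s (π i) ⊆ P.interval 0 j P.s (π j) := by
  rw [← path_zero hπ]
  exact hmono 0 0 i j π le_rfl hi hij hj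
    ⟨fun k h1 h2 => hπ.1 k h1 (h2.trans hj), fun k h1 h2 => hπ.2 k h1 (h2.trans_le hj)⟩

theorem interval_suffix_mono (hmono : P.IntervalsMonotone) (hπ : P.IsPath 0 P.m π) {i j : ℕ}
    (hij : i ≤ j) (hj : j < P.m) :
    P.interval j P.m (π j) P.t ⊆ P.interval i P.m (π i) P.t := by
  rw [← path_last hπ]
  exact hmono i j P.m P.m π hij hj le_rfl le_rfl
    ⟨fun k _ h2 => hπ.1 k (Nat.zero_le _) h2, fun k _ h2 => hπ.2 k (Nat.zero_le _) h2⟩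

/-- On an `s`-to-`t` path of a program with monotone intervals, all nodes are ascending or all
nodes are descending. -/
theorem path_ascending_or_descending (hmono : P.IntervalsMonotone) (hπ : P.IsPath 0 P.m π) :
    (∀ i, 0 < i → i < P.m → P.Ascending i (π i)) ∨
      ∀ i, 0 < i → i < P.m → P.Descending i (π i) := by
  by_contra! h
  obtain ⟨⟨i, hi, him, hi'⟩, j, hj, hjm, hj'⟩ := h
  have hmemi := hπ.1 i (Nat.zero_le _) him.le
  have hmemj := hπ.1 j (Nat.zero_le _) hjm.le
  have hdesc : P.Descending i (π i) := (ascending_or_descending hi him hmemi).resolve_left hi'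
  have hasc : P.Ascending j (π j) := (ascending_or_descending hj hjm hmemj).resolve_right hj'
  rcases le_total i j with hij | hji
  · have h1 := interval_prefix_mono hmono hπ hi hij hjm.le
    have h2 := interval_suffix_mono hmono hπ hij hjm
    rcases IntervalLE.eq_empty_or_eq_empty (IntervalLE.mono hasc h1 subset_rfl)
      (IntervalLE.mono hdesc h2 subset_rfl) ((disjoint_at hj hjm hmemj).mono_left h1) with h | h
    · exact hi' (IntervalLE.of_empty_left h)
    · exact hj' (IntervalLE.of_empty_left h)
  · have h1 := interval_prefix_mono hmono hπ hj hji him.le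
    have h2 := interval_suffix_mono hmono hπ hji him
    rcases IntervalLE.eq_empty_or_eq_empty (IntervalLE.mono hasc subset_rfl h2)
      (IntervalLE.mono hdesc subset_rfl h1) ((disjoint_at hj hjm hmemj).mono_right h2) with h | h
    · exact hj' (IntervalLE.of_empty_right h)
    · exact hi' (IntervalLE.of_empty_right h)

/-- An `s`-to-`t` path contains a neutral edge if and only if all its nodes are both ascending
and descending. -/
theorem exists_neutral_iff (hmono : P.IntervalsMonotone) (hπ : P.IsPath 0 P.m π) :
    (∃ k < P.m, P.Neutral k (π k) (π (k + 1))) ↔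
      (∀ i, 0 < i → i < P.m → P.Ascending i (π i)) ∧
        ∀ i, 0 < i → i < P.m → P.Descending i (π i) := by
  constructor
  · rintro ⟨k, hk, h1, h2⟩
    have key : ∀ i, 0 < i → i < P.m →
        P.interval 0 i P.s (π i) = ∅ ∨ P.interval i P.m (π i) P.t = ∅ := by
      intro i hi him
      rcases le_or_gt i k with hik | hki
      · left
        rcases h1 with h1 | h1
        · lia
        · exact Set.subset_empty_iff.1 (h1 ▸ interval_prefix_mono hmono hπ hi hik hk.le)
      · right
        rcases h2 with h2 | h2
        · lia
        · exact Set.subset_empty_iff.1 (h2 ▸ interval_suffix_mono hmono hπ hki him)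
    exact ⟨fun i hi him => (key i hi him).elim .of_empty_left .of_empty_right,
      fun i hi him => (key i hi him).elim .of_empty_right .of_empty_left⟩
  · rintro ⟨hasc, hdesc⟩
    classical
    let A : ℕ → Prop := fun k => k < P.m ∧ (k = 0 ∨ P.interval 0 k P.s (π k) = ∅)
    have hA0 : A 0 := ⟨P.m_pos, Or.inl rfl⟩
    have hA : A (Nat.findGreatest A P.m) := Nat.findGreatest_spec (Nat.zero_le _) hA0
    refine ⟨_, hA.1, hA.2, or_iff_not_imp_left.2 fun hne => ?_⟩
    have hlt : Nat.findGreatest A P.m + 1 < P.m := lt_of_le_of_ne hA.1 hne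
    have hnot := Nat.findGreatest_is_greatest (Nat.lt_succ_self _) hlt.le
    refine (IntervalLE.eq_empty_or_eq_empty (hasc _ (Nat.succ_pos _) hlt)
      (hdesc _ (Nat.succ_pos _) hlt) (disjoint_at (Nat.succ_pos _) hlt
        (hπ.1 _ (Nat.zero_le _) hlt.le))).resolve_left fun h => hnot ⟨hlt, Or.inr h⟩

end path

/-- The subprogram of the ascending nodes. -/
noncomputable def ascendingPart (P : StrictIntervalABP F n) : StrictIntervalABP F n :=
  P.restrict (fun i v => 0 < i → i < P.m → P.Ascending i v) (fun _ _ _ => False)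
    (fun h => (lt_irrefl _ h).elim) (fun _ h => (lt_irrefl _ h).elim)

/-- The subprogram of the descending nodes, without the neutral edges. -/
noncomputable def descendingPart (P : StrictIntervalABP F n) : StrictIntervalABP F n :=
  P.restrict (fun i v => 0 < i → i < P.m → P.Descending i v) P.Neutral
    (fun h => (lt_irrefl _ h).elim) (fun _ h => (lt_irrefl _ h).elim)

theorem eval_eq_ascendingPart_add_descendingPart [Field F] {P : StrictIntervalABP F n}
    (hmono : P.IntervalsMonotone) :
    P.toABP.eval = P.ascendingPart.toABP.eval + P.descendingPart.toABP.eval := by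
  classical
  unfold ascendingPart descendingPart restrict
  rw [ABP.eval_restrict, ABP.eval_restrict, ← Finset.sum_add_distrib, ABP.eval]
  refine Finset.sum_congr rfl fun π hπ => ?_
  by_cases hedge : ∃ k : Fin P.m, P.label k (π k.castSucc) (π k.succ) = none
  · obtain ⟨k, hk⟩ := hedge
    have h0 : ∏ k : Fin P.m, ABP.edgeVal (P.label k (π k.castSucc) (π k.succ)) = 0 :=
      Finset.prod_eq_zero (Finset.mem_univ k) (by rw [hk, ABP.edgeVal])
    simp [h0]
  push Not at hedge
  obtain ⟨σ, hσ⟩ : ∃ σ : ℕ → ℕ, ∀ i : Fin (P.m + 1), π i = σ i :=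
    ⟨fun k => if h : k < P.m + 1 then π ⟨k, h⟩ else 0,
      fun i => by dsimp only; rw [dif_pos i.isLt]⟩
  have hpath : P.IsPath 0 P.m σ := by
    refine ⟨fun k _ hk => ?_, fun k _ hk => ?_⟩
    · have := Fintype.mem_piFinset.1 hπ ⟨k, Nat.lt_succ_of_le hk⟩
      rwa [hσ] at this
    · have := hedge ⟨k, hk⟩
      rwa [hσ, hσ] at this
  have hkeep : ∀ Q : ℕ → ℕ → Prop,
      (∀ i : Fin (P.m + 1), 0 < (i : ℕ) → (i : ℕ) < P.m → Q i (π i)) ↔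
        ∀ i, 0 < i → i < P.m → Q i (σ i) := fun Q =>
    ⟨fun h i h0 hm => hσ ⟨i, hm.trans (Nat.lt_succ_self _)⟩ ▸ h ⟨i, by lia⟩ h0 hm,
      fun h i h0 hm => hσ i ▸ h i h0 hm⟩
  have hcut : (∀ k : Fin P.m, ¬ P.Neutral k (π k.castSucc) (π k.succ)) ↔
      ¬ ∃ k < P.m, P.Neutral k (σ k) (σ (k + 1)) := by
    simp only [hσ, Fin.val_castSucc, Fin.val_succ, Fin.forall_iff]
    push Not
    rfl
  rw [exists_neutral_iff hmono hpath, ← hkeep, ← hkeep] at hcut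
  have hor := path_ascending_or_descending hmono hpath
  rw [← hkeep, ← hkeep] at hor
  by_cases ha : ∀ i : Fin (P.m + 1), 0 < (i : ℕ) → (i : ℕ) < P.m → P.Ascending i (π i)
  · rw [if_pos ⟨ha, fun _ => id⟩, if_neg fun h => hcut.1 h.2 ⟨ha, h.1⟩, add_zero]
  · rw [if_neg fun h => ha h.1,
      if_pos ⟨hor.resolve_left ha, hcut.2 fun h => ha h.1⟩, zero_add]

theorem exists_split_of_intervalsMonotone [Field F] {P : StrictIntervalABP F n}
    (hmono : P.IntervalsMonotone) :
    ∃ P₁ P₂ : StrictIntervalABP F n,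
      P₁.toABP.IsSubprogram P.toABP ∧ P₂.toABP.IsSubprogram P.toABP ∧
      P₁.toABP.size ≤ P.toABP.size ∧ P₂.toABP.size ≤ P.toABP.size ∧
      (∀ i v, 0 < i → i < P₁.m → v ∈ P₁.node i → P₁.Ascending i v) ∧
      (∀ i v, 0 < i → i < P₂.m → v ∈ P₂.node i → P₂.Descending i v) ∧
      P.toABP.eval = P₁.toABP.eval + P₂.toABP.eval ∧
      P₁.interval = P.interval ∧ P₂.interval = P.interval := by
  have h₁ : P.ascendingPart.toABP.IsSubprogram P.toABP :=
    isSubprogram_restrict _ _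
  have h₂ : P.descendingPart.toABP.IsSubprogram P.toABP :=
    isSubprogram_restrict _ _
  exact ⟨P.ascendingPart, P.descendingPart, h₁, h₂, h₁.size_le, h₂.size_le,
    fun i v hi hm hv => keep_of_mem_restrict _ _ hv hi hm,
    fun i v hi hm hv => keep_of_mem_restrict _ _ hv hi hm,
    eval_eq_ascendingPart_add_descendingPart hmono, rfl, rfl⟩

end StrictIntervalABP

theorem strictInterval_split_asc_desc {F : Type*} [Field F] (n : ℕ)
    (P : StrictIntervalABP F n) :
    ∃ P₁ P₂ : StrictIntervalABP F n,
      P₁.toABP.IsSubprogram P.toABP ∧ P₂.toABP.IsSubprogram P.toABP ∧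
      P₁.toABP.size ≤ P.toABP.size ∧ P₂.toABP.size ≤ P.toABP.size ∧
      (∀ i v, 0 < i → i < P₁.m → v ∈ P₁.node i → P₁.Ascending i v) ∧
      (∀ i v, 0 < i → i < P₂.m → v ∈ P₂.node i → P₂.Descending i v) ∧
      P.toABP.eval = P₁.toABP.eval + P₂.toABP.eval ∧
      (P.IntervalsNonempty → P.IntervalsMonotone →
        P₁.interval = P.interval ∧ P₂.interval = P.interval) := by
  by_cases hmono : P.IntervalsMonotone
  · obtain ⟨P₁, P₂, h1, h2, h3, h4, h5, h6, h7, h8⟩ :=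
      StrictIntervalABP.exists_split_of_intervalsMonotone hmono
    exact ⟨P₁, P₂, h1, h2, h3, h4, h5, h6, h7, fun _ _ => h8⟩
  · obtain ⟨P₁, P₂, h1, h2, h3, h4, h5, h6, h7, -⟩ :=
      StrictIntervalABP.exists_split_of_intervalsMonotone P.tighten_intervalsMonotone
    exact ⟨P₁, P₂, h1, h2, h3, h4, h5, h6, h7, fun _ h => (hmono h).elim⟩
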